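/- (Operator-valued spectral averaging.) Let H₀ be self-adjoint in the complex separable Hilbert space H and K ∈ B₂(H) Hilbert–Schmidt, and for s ∈ [0,1] let H₀ + sKK* be the self-adjoint operator on dom(H₀). Let Ξ(λ) be the spectral shift operator associated with Φ(z) = I_H + K*(H₀ − z)⁻¹K, i.e., the a.e.-defined family with 0 ≤ Ξ(λ) ∈ B₁(H), ‖Ξ(·)‖_{B₁} ∈ L¹(ℝ; dλ), and log(Φ(z)) = ∫_ℝ dλ Ξ(λ)(λ − z)⁻¹ for z ∈ ℂ∖ℝ. Then ∫₀¹ ds d(K* E_{H₀ + sKK*}(λ) K) = Ξ(λ) dλ in the weak sense; that is, for all f, g ∈ H and every bounded Borel set B ⊆ ℝ, ∫₀¹ ds (f, K* E_{H₀ + sKK*}(B) K g) = ∫_B dλ (f, Ξ(λ) g). -/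

import Mathlib

open Complex Filter MeasureTheory TopologicalSpace ContinuousLinearMap
open scoped InnerProductSpace Topology

noncomputable section

namespace SpectralShift

variable {H : Type*} [NormedAddCommGroup H] [InnerProductSpace ℂ H] [CompleteSpace H]

/-- The imaginary part `(T - T*)/(2i)` of a bounded operator. -/
def imPart (T : H →L[ℂ] H) : H →L[ℂ] H :=
  ((2 * Complex.I)⁻¹ : ℂ) • (T - ContinuousLinearMap.adjoint T)

/-- An operator-valued Herglotz function: analytic on the open upper half-plane with
nonnegative imaginary part there. -/
def IsHerglotz (M : ℂ → H →L[ℂ] H) : Prop :=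
  DifferentiableOn ℂ M {z : ℂ | 0 < z.im} ∧ ∀ z : ℂ, 0 < z.im → (imPart (M z)).IsPositive

/-- The integrand `(T + iλ)⁻¹ - (1 + iλ)⁻¹ I` in the integral representation of `log T`. -/
def logIntegrand (T : H →L[ℂ] H) (t : ℝ) : H →L[ℂ] H :=
  Ring.inverse (T + ((t : ℂ) * Complex.I) • (1 : H →L[ℂ] H)) -
    (((1 : ℂ) + (t : ℂ) * Complex.I)⁻¹) • (1 : H →L[ℂ] H)

/-- `log T = -i ∫₀^∞ ((T + iλ)⁻¹ - (1 + iλ)⁻¹ I) dλ` as a norm-convergent improper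
Riemann integral, for a dissipative boundedly invertible `T`. -/
def opLog (T : H →L[ℂ] H) : H →L[ℂ] H :=
  limUnder atTop (fun R : ℝ => (-Complex.I) • ∫ t in (0:ℝ)..R, logIntegrand T t)

/-- The logarithm `log S = (log S*)*` of an operator `S` with `-S` dissipative. -/
def opLogAnti (T : H →L[ℂ] H) : H →L[ℂ] H :=
  ContinuousLinearMap.adjoint (opLog (ContinuousLinearMap.adjoint T))

/-- The logarithm of a Herglotz-type operator family on `ℂ ∖ ℝ`, using `log T` in the
upper half-plane and the convention `log S = (log S*)*` in the lower half-plane. -/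
def logHerg (Φ : ℂ → H →L[ℂ] H) (z : ℂ) : H →L[ℂ] H :=
  if 0 < z.im then opLog (Φ z) else opLogAnti (Φ z)

/-- The logarithm of an anti-Herglotz-type operator family on `ℂ ∖ ℝ` (nonpositive
imaginary part in the upper half-plane). -/
def logAntiHerg (Φ : ℂ → H →L[ℂ] H) (z : ℂ) : H →L[ℂ] H :=
  if 0 < z.im then opLogAnti (Φ z) else opLog (Φ z)

/-- Trace class: absolute summability of the diagonal in every Hilbert basis. -/
def IsTraceClass (T : H →L[ℂ] H) : Prop :=
  ∀ (w : Set H) (b : HilbertBasis w ℂ H), Summable fun i => ‖⟪(b i : H), T (b i)⟫_ℂ‖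

/-- The trace, computed in a fixed Hilbert basis (basis-independent for trace
class operators). -/
def trH (T : H →L[ℂ] H) : ℂ :=
  ∑' i, ⟪((exists_hilbertBasis ℂ H).choose_spec.choose i : H),
    T ((exists_hilbertBasis ℂ H).choose_spec.choose i)⟫_ℂ

/-- The trace norm, via duality with bounded operators (the correct value for trace
class operators). -/
def traceNorm (T : H →L[ℂ] H) : ℝ :=
  ⨆ B : {B : H →L[ℂ] H // ‖B‖ ≤ 1}, ‖trH (T * (B : H →L[ℂ] H))‖

/-- Hilbert-Schmidt operators. -/
def IsHilbertSchmidt (K : H →L[ℂ] H) : Prop :=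
  ∀ (w : Set H) (b : HilbertBasis w ℂ H), Summable fun i => ‖K (b i)‖ ^ 2

/-- A (possibly unbounded) self-adjoint operator in `H`: a densely defined symmetric
operator possessing everywhere-defined bounded resolvents at every non-real point. -/
structure SelfAdjointOp (H : Type*) [NormedAddCommGroup H] [InnerProductSpace ℂ H]
    [CompleteSpace H] where
  dom : Submodule ℂ H
  dense_dom : Dense (dom : Set H)
  op : dom →ₗ[ℂ] H
  symmetric : ∀ x y : dom, ⟪op x, (y : H)⟫_ℂ = ⟪(x : H), op y⟫_ℂ
  resolvent : ℂ → H →L[ℂ] H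
  resolvent_mem : ∀ {z : ℂ}, z.im ≠ 0 → ∀ x : H, resolvent z x ∈ dom
  op_resolvent : ∀ {z : ℂ} (hz : z.im ≠ 0) (x : H),
    op ⟨resolvent z x, resolvent_mem hz x⟩ - z • resolvent z x = x
  resolvent_op : ∀ {z : ℂ} (hz : z.im ≠ 0) (x : dom),
    resolvent z (op x - z • (x : H)) = x

/-- `B = A + V` for a bounded operator `V` (with `dom B = dom A`). -/
def IsSumOf (B A : SelfAdjointOp H) (V : H →L[ℂ] H) : Prop :=
  B.dom = A.dom ∧ ∀ (x : H) (hxB : x ∈ B.dom) (hxA : x ∈ A.dom),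
    B.op ⟨x, hxB⟩ = A.op ⟨x, hxA⟩ + V x

/-- `R` is the (bounded, everywhere defined) resolvent `(A - z)⁻¹` of `A` at `z`. -/
def SelfAdjointOp.IsResolventAt (A : SelfAdjointOp H) (z : ℂ) (R : H →L[ℂ] H) : Prop :=
  (∀ x : H, R x ∈ A.dom) ∧
  (∀ (x : H) (hx : R x ∈ A.dom), A.op ⟨R x, hx⟩ - z • R x = x) ∧
  (∀ x : A.dom, R (A.op x - z • (x : H)) = x)

/-- `E` is the projection-valued spectral measure of the self-adjoint operator `A`. -/
def IsSpectralMeasure (A : SelfAdjointOp H) (E : Set ℝ → H →L[ℂ] H) : Prop :=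
  (∀ B : Set ℝ, MeasurableSet B → IsSelfAdjoint (E B)) ∧
  (∀ B C : Set ℝ, MeasurableSet B → MeasurableSet C → E B * E C = E (B ∩ C)) ∧
  (E Set.univ = 1) ∧
  (∀ (f : ℕ → Set ℝ), (∀ n, MeasurableSet (f n)) → Pairwise (Function.onFun Disjoint f) →
    ∀ x : H, HasSum (fun n => E (f n) x) (E (⋃ n, f n) x)) ∧
  ∃ μ : H → Measure ℝ,
    (∀ (f : H) (B : Set ℝ), MeasurableSet B → μ f B = ENNReal.ofReal (⟪f, E B f⟫_ℂ).re) ∧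
    ∀ (z : ℂ), z.im ≠ 0 → ∀ f : H,
      ⟪f, A.resolvent z f⟫_ℂ = ∫ l : ℝ, ((l : ℂ) - z)⁻¹ ∂(μ f)

/-- Invertibility of `T` restricted to the range of the orthogonal projection `P`
(for `T` commuting with `P`), with inverse `S` supported in `ran P`. -/
def InvertibleOn (T P : H →L[ℂ] H) : Prop :=
  ∃ S : H →L[ℂ] H, S * P = S ∧ P * S = S ∧ S * (T * P) = P ∧ (P * T) * S = P

/-- The spectral projection `J₊ = (I + J)/2` onto `H₊` for a self-adjoint unitary `J`. -/
def Jplus (J : H →L[ℂ] H) : H →L[ℂ] H := ((2 : ℂ)⁻¹) • (1 + J)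

/-- The spectral projection `J₋ = (I - J)/2` onto `H₋` for a self-adjoint unitary `J`. -/
def Jminus (J : H →L[ℂ] H) : H →L[ℂ] H := ((2 : ℂ)⁻¹) • (1 - J)

/-- `Φ₊(z) = I + J₊ K* (H₀ - z)⁻¹ K J₊`, the operator on `H` inducing `Φ₊(z)` on `H₊`
(and the identity on `H₋`). -/
def PhiPlus (H0 : SelfAdjointOp H) (J K : H →L[ℂ] H) (z : ℂ) : H →L[ℂ] H :=
  1 + Jplus J * (ContinuousLinearMap.adjoint K * H0.resolvent z * K) * Jplus J

/-- `Φ̃₋(z) = I - J₋ K* (H₊ - z)⁻¹ K J₋`, the operator on `H` inducing `Φ̃₋(z)` on `H₋`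
(and the identity on `H₊`). -/
def PhiMinusT (Hp : SelfAdjointOp H) (J K : H →L[ℂ] H) (z : ℂ) : H →L[ℂ] H :=
  1 - Jminus J * (ContinuousLinearMap.adjoint K * Hp.resolvent z * K) * Jminus J

/-- unnormalized Poisson kernel -/
def pk (y x l : ℝ) : ENNReal := ENNReal.ofReal (y / ((l - x) ^ 2 + y ^ 2))

lemma pk_meas (y : ℝ) : Measurable (fun p : ℝ × ℝ => pk y p.1 p.2) := by
  unfold pk; fun_prop

lemma pk_meas_l (y x : ℝ) : Measurable (pk y x) := by
  unfold pk; fun_prop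

lemma pk_cont_x {y : ℝ} (hy : 0 < y) (l : ℝ) : Continuous (fun x => pk y x l) := by
  unfold pk
  refine ENNReal.continuous_ofReal.comp (Continuous.div (by fun_prop) (by fun_prop) ?_)
  intro x; positivity

lemma pk_le {y : ℝ} (hy : 0 < y) (x l : ℝ) : pk y x l ≤ ENNReal.ofReal (1 / y) := by
  unfold pk
  apply ENNReal.ofReal_le_ofReal
  rw [div_le_div_iff₀ (by positivity) hy]
  nlinarith [sq_nonneg (l - x)]

/-- total mass -/
def pkC : ENNReal := ∫⁻ u : ℝ, pk 1 u 0

lemma pkC_eq : pkC = ENNReal.ofReal Real.pi := by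
  unfold pkC pk
  rw [← ofReal_integral_eq_lintegral_ofReal]
  · congr 1
    rw [← integral_univ_inv_one_add_sq]
    congr 1; ext u; rw [one_div]; congr 1; ring
  · refine integrable_inv_one_add_sq.congr (Eventually.of_forall fun u => ?_)
    simp only [one_div]; congr 1; ring
  · exact Eventually.of_forall fun u => by positivity

lemma pkC_ne_top : pkC ≠ ⊤ := by rw [pkC_eq]; exact ENNReal.ofReal_ne_top

lemma pkC_ne_zero : pkC ≠ 0 := by
  rw [pkC_eq]; simp [Real.pi_pos]

lemma pk_scale {y : ℝ} (hy : 0 < y) (l : ℝ) (g : ℝ → ENNReal) (hg : Measurable g) :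
    ∫⁻ x, g x * pk y x l = ∫⁻ u, g (l + y * u) * pk 1 u 0 := by
  have hm : Measurable (fun x => pk y x l) := by
    unfold pk; fun_prop
  have h1 : ∫⁻ x, g x * pk y x l = ∫⁻ x, g (l + x) * pk y (l + x) l :=
    (lintegral_add_left_eq_self (fun x => g x * pk y x l) l).symm
  rw [h1]
  conv_lhs => rw [← Real.smul_map_volume_mul_left hy.ne']
  have hG : Measurable (fun x => g (l + x) * pk y (l + x) l) :=
    (hg.comp (measurable_const_add l)).mul (hm.comp (measurable_const_add l))
  have hmul : Measurable (fun x : ℝ => y * x) := measurable_const_mul y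
  rw [lintegral_smul_measure, lintegral_map hG hmul,
    smul_eq_mul, ← lintegral_const_mul _ (show Measurable fun u => g (l + y * u) * pk y (l + y * u) l from hG.comp hmul)]
  refine lintegral_congr fun u => ?_
  rw [mul_left_comm]
  congr 1
  unfold pk
  rw [abs_of_pos hy, ← ENNReal.ofReal_mul hy.le]
  congr 1
  have : (1:ℝ) + u ^ 2 ≠ 0 := by positivity
  field_simp
  ring

lemma poisson_tendsto (ν : Measure ℝ) [IsFiniteMeasure ν] (g : BoundedContinuousFunction ℝ NNReal) :
    Tendsto (fun n : ℕ => ∫⁻ x, (g x : ENNReal) * ∫⁻ l, pk (1 / ((n : ℝ) + 1)) x l ∂ν) atTop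
      (𝓝 (pkC * ∫⁻ l, g l ∂ν)) := by
  have hgm : Measurable (fun x => (g x : ENNReal)) := by
    have := g.continuous.measurable
    fun_prop
  have hy : ∀ n : ℕ, 0 < 1 / ((n : ℝ) + 1) := fun n => by positivity
  have e : ∀ n : ℕ, ∫⁻ x, (g x : ENNReal) * ∫⁻ l, pk (1 / ((n : ℝ) + 1)) x l ∂ν
      = ∫⁻ l, (∫⁻ u, (g (l + 1 / ((n : ℝ) + 1) * u) : ENNReal) * pk 1 u 0) ∂ν := by
    intro n
    have : ∀ x, (g x : ENNReal) * ∫⁻ l, pk (1 / ((n : ℝ) + 1)) x l ∂ν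
        = ∫⁻ l, (g x : ENNReal) * pk (1 / ((n : ℝ) + 1)) x l ∂ν := fun x => by
      rw [lintegral_const_mul _ (pk_meas_l _ _)]
    simp_rw [this]
    rw [lintegral_lintegral_swap]
    · refine lintegral_congr fun l => ?_
      exact pk_scale (hy n) l (fun x => (g x : ENNReal)) hgm
    · exact ((hgm.comp measurable_fst).mul (pk_meas _)).aemeasurable
  simp_rw [e]
  have hb : ∀ x, (g x : ENNReal) ≤ (nndist g 0 : ENNReal) := fun x => by
    have := BoundedContinuousFunction.NNReal.upper_bound g x
    exact_mod_cast this
  have hpm : Measurable (fun u => pk 1 u 0) := by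
    unfold pk; fun_prop
  have hlim : pkC * ∫⁻ l, g l ∂ν = ∫⁻ l, (∫⁻ u, (g l : ENNReal) * pk 1 u 0) ∂ν := by
    rw [← lintegral_const_mul _ hgm]
    refine lintegral_congr fun l => ?_
    rw [lintegral_const_mul _ hpm, mul_comm]; rfl
  rw [hlim]
  have hfin : ∫⁻ u, (nndist g 0 : ENNReal) * pk 1 u 0 ≠ ⊤ := by
    rw [lintegral_const_mul _ hpm]
    exact ENNReal.mul_ne_top ENNReal.coe_ne_top pkC_ne_top
  have hgm2 : ∀ n : ℕ, Measurable (fun p : ℝ × ℝ => (g (p.1 + 1 / ((n : ℝ) + 1) * p.2) : ENNReal) * pk 1 p.2 0) := by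
    intro n
    exact (hgm.comp (by fun_prop : Measurable fun p : ℝ × ℝ => p.1 + 1 / ((n : ℝ) + 1) * p.2)).mul (hpm.comp measurable_snd)
  refine tendsto_lintegral_of_dominated_convergence
    (fun _ => ∫⁻ u, (nndist g 0 : ENNReal) * pk 1 u 0) ?_ ?_ ?_ ?_
  · intro n
    exact (hgm2 n).lintegral_prod_right'
  · intro n
    refine Eventually.of_forall fun l => ?_
    refine lintegral_mono fun u => ?_
    dsimp only
    gcongr
    exact_mod_cast hb _
  · rw [lintegral_const]
    exact ENNReal.mul_ne_top hfin (measure_ne_top _ _)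
  · refine Eventually.of_forall fun l => ?_
    refine tendsto_lintegral_of_dominated_convergence
      (fun u => (nndist g 0 : ENNReal) * pk 1 u 0) ?_ ?_ hfin ?_
    · intro n
      exact (hgm2 n).comp (by fun_prop : Measurable fun u : ℝ => (l, u))
    · intro n
      refine Eventually.of_forall fun u => ?_
      dsimp only
      gcongr
      exact_mod_cast hb _
    · refine Eventually.of_forall fun u => ?_
      refine ENNReal.Tendsto.mul_const ?_ (Or.inr (by unfold pk; exact ENNReal.ofReal_ne_top))
      rw [ENNReal.tendsto_coe]
      refine (g.continuous.tendsto l).comp ?_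
      have : Tendsto (fun n : ℕ => l + 1 / ((n : ℝ) + 1) * u) atTop (𝓝 (l + 0 * u)) :=
        (tendsto_one_div_add_atTop_nhds_zero_nat.mul_const u).const_add l
      simpa using this

lemma poisson_unique (ν₁ ν₂ : Measure ℝ) [IsFiniteMeasure ν₁]
    (h : ∀ x y : ℝ, 0 < y → ∫⁻ l, pk y x l ∂ν₁ = ∫⁻ l, pk y x l ∂ν₂) : ν₁ = ν₂ := by
  have hfin : IsFiniteMeasure ν₂ := by
    have hle : ∀ n : ℕ, ∫⁻ l, ENNReal.ofReal ((n:ℝ) + 1) * pk ((n:ℝ) + 1) 0 l ∂ν₂ ≤ ν₁ Set.univ := by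
      intro n
      rw [lintegral_const_mul _ (pk_meas_l _ _), ← h _ _ (by positivity),
        ← lintegral_const_mul _ (pk_meas_l _ _), ← lintegral_one]
      refine lintegral_mono fun l => ?_
      calc _ ≤ ENNReal.ofReal ((n:ℝ) + 1) * ENNReal.ofReal (1 / ((n:ℝ) + 1)) := by
            gcongr; exact pk_le (by positivity) _ _
        _ = 1 := by
            rw [← ENNReal.ofReal_mul (by positivity), mul_one_div_cancel (by positivity)]; simp
    have hlim : ∀ l : ℝ, Tendsto (fun n : ℕ => ENNReal.ofReal ((n:ℝ) + 1) * pk ((n:ℝ) + 1) 0 l) atTop (𝓝 1) := by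
      intro l
      have e : ∀ n : ℕ, ENNReal.ofReal ((n:ℝ) + 1) * pk ((n:ℝ) + 1) 0 l
          = ENNReal.ofReal (1 / ((l * (1 / ((n:ℝ) + 1))) ^ 2 + 1)) := by
        intro n
        unfold pk
        rw [← ENNReal.ofReal_mul (by positivity)]
        congr 1
        have : (0:ℝ) < (n:ℝ) + 1 := by positivity
        field_simp
        ring
      simp_rw [e]
      rw [← ENNReal.ofReal_one]
      refine ENNReal.tendsto_ofReal ?_
      have : Tendsto (fun n : ℕ => 1 / ((l * (1 / ((n:ℝ) + 1))) ^ 2 + 1)) atTop (𝓝 (1 / ((l * 0) ^ 2 + 1))) := by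
        refine Tendsto.div tendsto_const_nhds ?_ (by simp)
        exact ((tendsto_one_div_add_atTop_nhds_zero_nat.const_mul l).pow 2).add_const 1
      simpa using this
    constructor
    calc ν₂ Set.univ = ∫⁻ l, liminf (fun n : ℕ => ENNReal.ofReal ((n:ℝ) + 1) * pk ((n:ℝ) + 1) 0 l) atTop ∂ν₂ := by
          rw [← lintegral_one]
          exact lintegral_congr fun l => ((hlim l).liminf_eq).symm
      _ ≤ liminf (fun n : ℕ => ∫⁻ l, ENNReal.ofReal ((n:ℝ) + 1) * pk ((n:ℝ) + 1) 0 l ∂ν₂) atTop :=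
          lintegral_liminf_le fun n => (pk_meas_l _ _).const_mul _
      _ ≤ ν₁ Set.univ := liminf_le_of_frequently_le' (Frequently.of_forall hle)
      _ < ⊤ := measure_lt_top _ _
  refine ext_of_forall_lintegral_eq_of_IsFiniteMeasure fun g => ?_
  have t1 := poisson_tendsto ν₁ g
  have t2 := poisson_tendsto ν₂ g
  have e : ∀ n : ℕ, ∀ x, ∫⁻ l, pk (1 / ((n : ℝ) + 1)) x l ∂ν₁ = ∫⁻ l, pk (1 / ((n : ℝ) + 1)) x l ∂ν₂ :=
    fun n x => h _ _ (by positivity)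
  simp_rw [e] at t1
  exact (ENNReal.mul_right_inj pkC_ne_zero pkC_ne_top).1 (tendsto_nhds_unique t1 t2)

lemma poisson_measurable {α : Type*} [MeasurableSpace α] (ν : α → Measure ℝ) [∀ a, IsFiniteMeasure (ν a)]
    (h : ∀ x y : ℝ, 0 < y → Measurable fun a => ∫⁻ l, pk y x l ∂(ν a)) : Measurable ν := by
  have hg : ∀ g : BoundedContinuousFunction ℝ NNReal, Measurable fun a => ∫⁻ l, g l ∂(ν a) := by
    intro g
    have hgm : Measurable (fun x => (g x : ENNReal)) := by
      have := g.continuous.measurable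
      fun_prop
    have h1 : Measurable fun a => pkC * ∫⁻ l, g l ∂(ν a) := by
      refine measurable_of_tendsto_metrizable (f := fun (n : ℕ) a =>
        ∫⁻ x, (g x : ENNReal) * ∫⁻ l, pk (1 / ((n : ℝ) + 1)) x l ∂(ν a)) ?_ ?_
      · intro n
        have hy : 0 < 1 / ((n : ℝ) + 1) := by positivity
        have hj : Measurable (Function.uncurry fun (x : ℝ) (a : α) => ∫⁻ l, pk (1 / ((n : ℝ) + 1)) x l ∂(ν a)) := by
          refine measurable_uncurry_of_continuous_of_measurable ?_ ?_
          · intro a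
            rw [continuous_iff_continuousAt]
            intro x
            refine tendsto_lintegral_filter_of_dominated_convergence
              (fun _ => ENNReal.ofReal (1 / (1 / ((n : ℝ) + 1)))) ?_ ?_ ?_ ?_
            · exact Eventually.of_forall fun x => pk_meas_l _ _
            · exact Eventually.of_forall fun x => Eventually.of_forall fun l => pk_le hy _ _
            · rw [lintegral_const]
              exact ENNReal.mul_ne_top ENNReal.ofReal_ne_top (measure_ne_top _ _)
            · exact Eventually.of_forall fun l => (pk_cont_x hy l).tendsto x
          · intro x; exact h x _ hy
        have h2 : Measurable (fun p : α × ℝ => (g p.2 : ENNReal) * ∫⁻ l, pk (1 / ((n : ℝ) + 1)) p.2 l ∂(ν p.1)) :=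
          (hgm.comp measurable_snd).mul (hj.comp measurable_swap)
        exact h2.lintegral_prod_right'
      · rw [tendsto_pi_nhds]
        intro a; exact poisson_tendsto (ν a) g
    have e : (fun a => ∫⁻ l, g l ∂(ν a)) = fun a => pkC⁻¹ * (pkC * ∫⁻ l, g l ∂(ν a)) := by
      ext a
      rw [← mul_assoc, ENNReal.inv_mul_cancel pkC_ne_zero pkC_ne_top, one_mul]
    rw [e]
    exact h1.const_mul _
  have hF : ∀ F : Set ℝ, IsClosed F → Measurable fun a => ν a F := by
    intro F hF
    refine measurable_of_tendsto_metrizable (f := fun (n : ℕ) a => ∫⁻ x, hF.apprSeq n x ∂(ν a)) ?_ ?_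
    · intro n; exact hg _
    · rw [tendsto_pi_nhds]
      intro a; exact HasOuterApproxClosed.tendsto_lintegral_apprSeq hF (ν a)
  refine Measurable.measure_of_isPiSystem (S := {s | IsClosed s}) ?_ isPiSystem_isClosed ?_ (hF _ isClosed_univ)
  · rw [BorelSpace.measurable_eq (α := ℝ), borel_eq_generateFrom_isClosed]
  · intro s hs; exact hF s hs

lemma res_eq1 {A B : SelfAdjointOp H} {V : H →L[ℂ] H} (h : IsSumOf B A V) {z : ℂ} (hz : z.im ≠ 0) :
    B.resolvent z + A.resolvent z * V * B.resolvent z = A.resolvent z := by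
  ext x
  have hyB := B.resolvent_mem hz x
  have hyA : B.resolvent z x ∈ A.dom := h.1 ▸ hyB
  have e1 := B.op_resolvent hz x
  rw [h.2 _ hyB hyA] at e1
  have e2 := A.resolvent_op hz ⟨_, hyA⟩
  have e3 : A.resolvent z x = A.resolvent z ((A.op ⟨_, hyA⟩ - z • B.resolvent z x) + V (B.resolvent z x)) := by
    congr 1; rw [sub_add_eq_add_sub]; exact e1.symm
  rw [map_add] at e3
  simp only at e2
  rw [e2] at e3
  simp [e3]

lemma res_eq2 {A B : SelfAdjointOp H} {V : H →L[ℂ] H} (h : IsSumOf B A V) {z : ℂ} (hz : z.im ≠ 0) :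
    B.resolvent z + B.resolvent z * V * A.resolvent z = A.resolvent z := by
  ext x
  have hyA := A.resolvent_mem hz x
  have hyB : A.resolvent z x ∈ B.dom := h.1 ▸ hyA
  have e1 := A.op_resolvent hz x
  have e2 := B.resolvent_op hz ⟨_, hyB⟩
  rw [h.2 _ hyB hyA] at e2
  have e3 : A.op ⟨A.resolvent z x, hyA⟩ + V (A.resolvent z x) - z • A.resolvent z x
      = x + V (A.resolvent z x) := by
    rw [add_sub_right_comm, e1]
  simp only at e2
  rw [e3, map_add] at e2
  simpa using e2

lemma res_im (A : SelfAdjointOp H) {z : ℂ} (hz : 0 < z.im) (x : H) :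
    0 ≤ (⟪x, A.resolvent z x⟫_ℂ).im := by
  have hy := A.resolvent_mem hz.ne' x
  have e1 := A.op_resolvent hz.ne' x
  set y := A.resolvent z x with hydef
  have e2 : ⟪x, y⟫_ℂ = ⟪A.op ⟨y, hy⟩, y⟫_ℂ - (starRingEnd ℂ) z * ⟪y, y⟫_ℂ := by
    conv_lhs => rw [← e1]
    rw [inner_sub_left, inner_smul_left]
  have e3 : (⟪A.op ⟨y, hy⟩, y⟫_ℂ).im = 0 := by
    have h1 := A.symmetric ⟨y, hy⟩ ⟨y, hy⟩
    have h2 := inner_conj_symm (𝕜 := ℂ) y (A.op ⟨y, hy⟩)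
    simp only at h1
    rw [← h1] at h2
    exact Complex.conj_eq_iff_im.1 h2
  rw [e2, Complex.sub_im, e3, inner_self_eq_norm_sq_to_K]
  have : ((starRingEnd ℂ) z * ((‖y‖ : ℂ)) ^ 2).im = - (z.im * ‖y‖ ^ 2) := by
    rw [← Complex.ofReal_pow, Complex.im_mul_ofReal, Complex.conj_im]; ring
  have h3 : ((starRingEnd ℂ) z * ((RCLike.ofReal ‖y‖ : ℂ)) ^ 2).im = - (z.im * ‖y‖ ^ 2) := this
  rw [h3]
  have : 0 ≤ z.im * ‖y‖ ^ 2 := by positivity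
  linarith

lemma unit_of_dissipative {T : H →L[ℂ] H} (hT : ∀ x, 0 ≤ (⟪x, T x⟫_ℂ).im) {t : ℝ} (ht : 0 < t) :
    IsUnit (T + ((t : ℂ) * Complex.I) • (1 : H →L[ℂ] H)) := by
  refine isUnit_of_forall_le_norm_inner_map _ (c := ⟨t, ht.le⟩) ht fun x => ?_
  rw [norm_inner_symm]
  refine le_trans ?_ (Complex.abs_im_le_norm _)
  refine le_trans ?_ (le_abs_self _)
  have e : ⟪x, (T + ((t : ℂ) * Complex.I) • (1 : H →L[ℂ] H)) x⟫_ℂ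
      = ⟪x, T x⟫_ℂ + (t : ℂ) * Complex.I * ((‖x‖ ^ 2 : ℝ) : ℂ) := by
    simp [inner_add_right, inner_smul_right, inner_self_eq_norm_sq_to_K]
  rw [e, Complex.add_im]
  have e2 : ((t : ℂ) * Complex.I * ((‖x‖ ^ 2 : ℝ) : ℂ)).im = t * ‖x‖ ^ 2 := by
    rw [Complex.im_mul_ofReal]; simp
  rw [e2]
  have := hT x
  change ‖x‖ ^ 2 * t ≤ _
  linarith

/-- `1 + sM + it` -/
def UU (M : H →L[ℂ] H) (s t : ℝ) : H →L[ℂ] H :=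
  (1 + (s : ℂ) • M) + ((t : ℂ) * Complex.I) • (1 : H →L[ℂ] H)

lemma UU_unit {M : H →L[ℂ] H} (hM : ∀ x, 0 ≤ (⟪x, M x⟫_ℂ).im)
    (hu : ∀ s ∈ Set.Icc (0:ℝ) 1, IsUnit (1 + (s : ℂ) • M)) {s t : ℝ} (hs : s ∈ Set.Icc (0:ℝ) 1)
    (ht : 0 ≤ t) : IsUnit (UU M s t) := by
  rcases ht.eq_or_lt with rfl | ht
  · simpa [UU] using hu s hs
  · refine unit_of_dissipative (fun x => ?_) ht
    have e : ⟪x, (1 + (s : ℂ) • M) x⟫_ℂ = ((‖x‖ ^ 2 : ℝ) : ℂ) + (s : ℂ) * ⟪x, M x⟫_ℂ := by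
      simp [inner_add_right, inner_smul_right, inner_self_eq_norm_sq_to_K]
    rw [e, Complex.add_im, Complex.ofReal_im, Complex.im_ofReal_mul, zero_add]
    exact mul_nonneg hs.1 (hM x)

lemma UU_cont (M : H →L[ℂ] H) : Continuous (fun p : ℝ × ℝ => UU M p.1 p.2) := by
  unfold UU; fun_prop

lemma UU_inv_cont {M : H →L[ℂ] H} {p : ℝ × ℝ} (h : IsUnit (UU M p.1 p.2)) :
    ContinuousAt (fun p : ℝ × ℝ => Ring.inverse (UU M p.1 p.2)) p := by
  obtain ⟨u, hu⟩ := h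
  have h1 : ContinuousAt Ring.inverse (UU M p.1 p.2) := by
    rw [← hu]; exact NormedRing.inverse_continuousAt u
  exact ContinuousAt.comp (f := fun p : ℝ × ℝ => UU M p.1 p.2) h1 (UU_cont M).continuousAt

lemma inv_deriv {U : ℝ → H →L[ℂ] H} {U' : H →L[ℂ] H} {s : ℝ} (hU : HasDerivAt U U' s) (h : IsUnit (U s)) :
    HasDerivAt (fun s => Ring.inverse (U s)) (-(Ring.inverse (U s) * U' * Ring.inverse (U s))) s := by
  obtain ⟨u, hu⟩ := h
  have h1 := hasFDerivAt_ringInverse (𝕜 := ℝ) u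
  rw [hu] at h1
  have h2 := h1.comp_hasDerivAt s hU
  rw [← hu]
  rw [Ring.inverse_unit]
  exact h2.congr_deriv (by simp)

lemma UU_ds (M : H →L[ℂ] H) (s t : ℝ) : HasDerivAt (fun s => UU M s t) M s := by
  unfold UU
  have h : HasDerivAt (fun s : ℝ => (s : ℂ) • M) ((1:ℂ) • M) s :=
    (Complex.ofRealCLM.hasDerivAt (x := s)).smul_const M
  have := (h.const_add 1).add_const (((t : ℂ) * Complex.I) • (1 : H →L[ℂ] H))
  simpa using this

lemma UU_dt (M : H →L[ℂ] H) (s t : ℝ) :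
    HasDerivAt (fun t => UU M s t) (Complex.I • (1 : H →L[ℂ] H)) t := by
  unfold UU
  have h : HasDerivAt (fun t : ℝ => ((t : ℂ) * Complex.I) • (1 : H →L[ℂ] H)) (((1:ℂ) * Complex.I) • (1 : H →L[ℂ] H)) t :=
    ((Complex.ofRealCLM.hasDerivAt (x := t)).mul_const Complex.I).smul_const _
  have := h.const_add (1 + (s : ℂ) • M)
  simpa using this

lemma UU_comm {M : H →L[ℂ] H} {s t : ℝ} (h : IsUnit (UU M s t)) :
    M * Ring.inverse (UU M s t) = Ring.inverse (UU M s t) * M := by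
  have hc : UU M s t * M = M * UU M s t := by
    unfold UU
    simp [add_mul, mul_add]
  have h1 := Ring.inverse_mul_cancel _ h
  have h2 := Ring.mul_inverse_cancel _ h
  calc M * Ring.inverse (UU M s t)
      = (Ring.inverse (UU M s t) * UU M s t) * M * Ring.inverse (UU M s t) := by rw [h1, one_mul]
    _ = Ring.inverse (UU M s t) * (UU M s t * M) * Ring.inverse (UU M s t) := by simp only [mul_assoc]
    _ = Ring.inverse (UU M s t) * M * (UU M s t * Ring.inverse (UU M s t)) := by
        rw [hc]; simp only [mul_assoc]
    _ = _ := by rw [h2, mul_one]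

lemma UU_decay [Nontrivial H] {M : H →L[ℂ] H} {s t : ℝ} (hs : s ∈ Set.Icc (0:ℝ) 1) (h : IsUnit (UU M s t))
    (ht : 1 + ‖M‖ < t) : ‖Ring.inverse (UU M s t)‖ ≤ (t - (1 + ‖M‖))⁻¹ := by
  have h2 := Ring.mul_inverse_cancel _ h
  set W := Ring.inverse (UU M s t)
  have hM0 := norm_nonneg M
  have e : ((t : ℂ) * Complex.I) • W = 1 - (W + (s:ℂ) • (M * W)) := by
    rw [← h2]; unfold UU
    simp [add_mul]
  have n1 : ‖((t : ℂ) * Complex.I) • W‖ = t * ‖W‖ := by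
    rw [norm_smul]; simp
    left; linarith
  have n2 : ‖((t : ℂ) * Complex.I) • W‖ ≤ 1 + (‖W‖ + ‖M‖ * ‖W‖) := by
    rw [e]
    refine (norm_sub_le _ _).trans (add_le_add (by simp) ((norm_add_le _ _).trans (add_le_add le_rfl ?_)))
    rw [norm_smul]
    have : ‖(s:ℂ)‖ ≤ 1 := by simpa [abs_of_nonneg hs.1] using hs.2
    calc _ ≤ 1 * (‖M‖ * ‖W‖) := mul_le_mul this (norm_mul_le _ _) (norm_nonneg _) zero_le_one
      _ = _ := one_mul _
  rw [n1] at n2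
  rw [← one_div, le_div_iff₀ (by linarith)]
  linarith

lemma log_integral_R {M : H →L[ℂ] H} (hM : ∀ x, 0 ≤ (⟪x, M x⟫_ℂ).im)
    (hu : ∀ s ∈ Set.Icc (0:ℝ) 1, IsUnit (1 + (s : ℂ) • M)) {R : ℝ} (hR : 0 ≤ R) :
    (-Complex.I) • ∫ t in (0:ℝ)..R, logIntegrand (1 + M) t =
      (∫ s in (0:ℝ)..1, Ring.inverse (1 + (s : ℂ) • M) * M) -
        ∫ s in (0:ℝ)..1, Ring.inverse (UU M s R) * M := by
  set W : ℝ → ℝ → H →L[ℂ] H := fun s t => Ring.inverse (UU M s t) with hW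
  have hunit : ∀ s ∈ Set.Icc (0:ℝ) 1, ∀ t, 0 ≤ t → IsUnit (UU M s t) := fun s hs t ht => UU_unit hM hu hs ht
  have hWc : ∀ p : ℝ × ℝ, p ∈ Set.Icc (0:ℝ) 1 ×ˢ Set.Icc (0:ℝ) R →
      ContinuousAt (fun p : ℝ × ℝ => W p.1 p.2) p := fun p hp =>
    UU_inv_cont (hunit p.1 hp.1 p.2 hp.2.1)
  have hFc : ∀ p : ℝ × ℝ, p ∈ Set.Icc (0:ℝ) 1 ×ˢ Set.Icc (0:ℝ) R →
      ContinuousAt (fun p : ℝ × ℝ => -(W p.1 p.2 * M * W p.1 p.2)) p := fun p hp =>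
    (((hWc p hp).mul continuousAt_const).mul (hWc p hp)).neg
  have hWs : ∀ t ∈ Set.Icc (0:ℝ) R, ContinuousOn (fun s => W s t) (Set.Icc (0:ℝ) 1) := fun t ht s hs =>
    (ContinuousAt.comp (f := fun s : ℝ => (s, t)) (hWc (s, t) ⟨hs, ht⟩) (by fun_prop)).continuousWithinAt
  have hFs : ∀ t ∈ Set.Icc (0:ℝ) R, ContinuousOn (fun s => -(W s t * M * W s t)) (Set.Icc (0:ℝ) 1) := fun t ht =>
    (((hWs t ht).mul continuousOn_const).mul (hWs t ht)).neg
  have hWt : ∀ s ∈ Set.Icc (0:ℝ) 1, ContinuousOn (fun t => W s t) (Set.Icc (0:ℝ) R) := fun s hs t ht =>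
    (ContinuousAt.comp (f := fun t : ℝ => (s, t)) (hWc (s, t) ⟨hs, ht⟩) (by fun_prop)).continuousWithinAt
  -- s-integration
  have h1 : ∀ t ∈ Set.Icc (0:ℝ) R, logIntegrand (1 + M) t = ∫ s in (0:ℝ)..1, -(W s t * M * W s t) := by
    intro t ht
    rw [intervalIntegral.integral_eq_sub_of_hasDerivAt (f := fun s => W s t)]
    · have h0 := hunit 0 (by simp) t ht.1
      have e0 : UU M 0 t = ((1 : ℂ) + (t : ℂ) * Complex.I) • (1 : H →L[ℂ] H) := by
        simp [UU, add_smul]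
      have e1 : UU M 1 t = (1 + M) + ((t : ℂ) * Complex.I) • (1 : H →L[ℂ] H) := by
        simp [UU]
      have hne : (1 : ℂ) + (t : ℂ) * Complex.I ≠ 0 := by
        intro h; have := congrArg Complex.re h; simp at this
      have e2 : W 0 t = (((1 : ℂ) + (t : ℂ) * Complex.I)⁻¹) • (1 : H →L[ℂ] H) := by
        have := Ring.inverse_mul_cancel _ h0
        have h3 : W 0 t * UU M 0 t = 1 := this
        rw [e0, mul_smul_comm, mul_one] at h3
        rw [← h3, smul_smul, inv_mul_cancel₀ hne, one_smul]
      simp only [e2]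
      simp only [hW, e1, logIntegrand]
    · intro s hs
      rw [Set.uIcc_of_le zero_le_one] at hs
      exact inv_deriv (UU_ds M s t) (hunit s hs t ht.1)
    · refine ContinuousOn.intervalIntegrable ?_
      rw [Set.uIcc_of_le zero_le_one]
      exact hFs t ht
  have h2 : ∀ s ∈ Set.Icc (0:ℝ) 1, (-Complex.I) • ∫ t in (0:ℝ)..R, -(W s t * M * W s t)
      = W s 0 * M - W s R * M := by
    intro s hs
    rw [← intervalIntegral.integral_smul]
    rw [intervalIntegral.integral_congr (g := fun t => -(-(W s t * (Complex.I • (1 : H →L[ℂ] H)) * W s t) * M)),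
      intervalIntegral.integral_eq_sub_of_hasDerivAt (f := fun t => -(W s t * M))]
    · abel
    · intro t ht
      rw [Set.uIcc_of_le hR] at ht
      exact ((inv_deriv (UU_dt M s t) (hunit s hs t ht.1)).mul_const M).neg
    · refine ContinuousOn.intervalIntegrable ?_
      rw [Set.uIcc_of_le hR]
      have := hWt s hs
      exact (((this.mul continuousOn_const).mul this).neg.mul continuousOn_const).neg
    · intro t ht
      rw [Set.uIcc_of_le hR] at ht
      have hc := UU_comm (hunit s hs t ht.1)
      change M * W s t = W s t * M at hc
      simp only [mul_assoc, hc]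
      simp [mul_assoc]
  have hswap : ∫ t in (0:ℝ)..R, ∫ s in (0:ℝ)..1, -(W s t * M * W s t)
      = ∫ s in (0:ℝ)..1, ∫ t in (0:ℝ)..R, -(W s t * M * W s t) := by
    symm
    apply intervalIntegral_intervalIntegral_swap (F := fun s t => -(W s t * M * W s t))
    rw [Set.uIoc_of_le zero_le_one, Set.uIoc_of_le hR]
    have : IntegrableOn (fun p : ℝ × ℝ => -(W p.1 p.2 * M * W p.1 p.2)) (Set.Icc (0:ℝ) 1 ×ˢ Set.Icc (0:ℝ) R) := by
      refine ContinuousOn.integrableOn_compact (isCompact_Icc.prod isCompact_Icc) ?_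
      exact fun p hp => (hFc p hp).continuousWithinAt
    exact this.mono_set (Set.prod_mono Set.Ioc_subset_Icc_self Set.Ioc_subset_Icc_self)
  rw [intervalIntegral.integral_congr (g := fun t => ∫ s in (0:ℝ)..1, -(W s t * M * W s t)), hswap,
    ← intervalIntegral.integral_smul, ← intervalIntegral.integral_sub]
  · refine intervalIntegral.integral_congr fun s hs => ?_
    rw [Set.uIcc_of_le zero_le_one] at hs
    simp only [h2 s hs]
    simp [hW, UU]
  · refine ContinuousOn.intervalIntegrable ?_
    rw [Set.uIcc_of_le zero_le_one]
    have := hWs 0 ⟨le_rfl, hR⟩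
    simp only [hW, UU, Complex.ofReal_zero, zero_mul, zero_smul, add_zero] at this
    exact this.mul continuousOn_const
  · refine ContinuousOn.intervalIntegrable ?_
    rw [Set.uIcc_of_le zero_le_one]
    exact (hWs R ⟨hR, le_rfl⟩).mul continuousOn_const
  · intro t ht
    rw [Set.uIcc_of_le hR] at ht
    exact h1 t ht

lemma opLog_eq {M : H →L[ℂ] H} (hM : ∀ x, 0 ≤ (⟪x, M x⟫_ℂ).im)
    (hu : ∀ s ∈ Set.Icc (0:ℝ) 1, IsUnit (1 + (s : ℂ) • M)) :
    opLog (1 + M) = ∫ s in (0:ℝ)..1, Ring.inverse (1 + (s : ℂ) • M) * M := by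
  rcases subsingleton_or_nontrivial H with hH | hH
  · exact Subsingleton.elim _ _
  unfold opLog
  apply Tendsto.limUnder_eq
  have hz : Tendsto (fun R : ℝ => ∫ s in (0:ℝ)..1, Ring.inverse (UU M s R) * M) atTop (𝓝 0) := by
    have hb : Tendsto (fun R : ℝ => (R - (1 + ‖M‖))⁻¹ * ‖M‖ * |(1:ℝ) - 0|) atTop (𝓝 0) := by
      have : Tendsto (fun R : ℝ => (R - (1 + ‖M‖))⁻¹) atTop (𝓝 0) :=
        tendsto_inv_atTop_zero.comp (tendsto_atTop_add_const_right _ _ tendsto_id)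
      simpa using this.mul_const ‖M‖
    refine squeeze_zero_norm' ?_ hb
    filter_upwards [eventually_gt_atTop (1 + ‖M‖)] with R hR
    have hM0 := norm_nonneg M
    refine intervalIntegral.norm_integral_le_of_norm_le_const fun s hs => ?_
    rw [Set.uIoc_of_le zero_le_one] at hs
    have hs' := Set.Ioc_subset_Icc_self hs
    refine (norm_mul_le _ _).trans ?_
    gcongr
    exact UU_decay hs' (UU_unit hM hu hs' (by linarith)) hR
  have := (tendsto_const_nhds (x := ∫ s in (0:ℝ)..1, Ring.inverse (1 + (s : ℂ) • M) * M)).sub hz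
  rw [sub_zero] at this
  refine this.congr' ?_
  filter_upwards [eventually_ge_atTop 0] with R hR
  exact (log_integral_R hM hu hR).symm

lemma polar (T : H →L[ℂ] H) (x y : H) :
    ⟪x, T y⟫_ℂ = (4:ℂ)⁻¹ * (⟪x + y, T (x + y)⟫_ℂ - ⟪x - y, T (x - y)⟫_ℂ
      - Complex.I * ⟪x + Complex.I • y, T (x + Complex.I • y)⟫_ℂ
      + Complex.I * ⟪x - Complex.I • y, T (x - Complex.I • y)⟫_ℂ) := by
  simp only [map_add, map_sub, inner_add_left, inner_add_right, map_smul, inner_smul_left,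
    inner_smul_right, Complex.conj_I, inner_sub_left, inner_sub_right]
  linear_combination ((1/2 : ℂ) * ⟪x, T y⟫_ℂ - (1/2 : ℂ) * ⟪y, T x⟫_ℂ) * Complex.I_sq

lemma im_cauchy (z : ℂ) (l : ℝ) : (((l : ℂ) - z)⁻¹).im = z.im / ((l - z.re) ^ 2 + z.im ^ 2) := by
  rw [Complex.inv_im, Complex.normSq_apply]
  simp
  ring

lemma cauchy_integrable (ν : Measure ℝ) [IsFiniteMeasure ν] {z : ℂ} (hz : 0 < z.im) :
    Integrable (fun l : ℝ => ((l : ℂ) - z)⁻¹) ν := by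
  refine Integrable.of_bound (C := z.im⁻¹) (by
    have : Measurable (fun l : ℝ => ((l : ℂ) - z)⁻¹) := by fun_prop
    exact this.aestronglyMeasurable) (Eventually.of_forall fun l => ?_)
  rw [norm_inv]
  gcongr
  have := Complex.abs_im_le_norm ((l : ℂ) - z)
  simp [abs_of_pos hz] at this
  exact this

lemma ofReal_im_integral {α : Type*} [MeasurableSpace α] {m : Measure α} {φ : α → ℂ} (hi : Integrable φ m)
    (h0 : ∀ᵐ a ∂m, 0 ≤ (φ a).im) :
    ENNReal.ofReal (∫ a, φ a ∂m).im = ∫⁻ a, ENNReal.ofReal (φ a).im ∂m := by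
  have e : (∫ a, φ a ∂m).im = ∫ a, (φ a).im ∂m := by
    have := integral_im hi
    simpa using this.symm
  have hi2 : Integrable (fun a => (φ a).im) m := hi.im
  rw [e, ofReal_integral_eq_lintegral_ofReal hi2 h0]

lemma poisson_eq (ν : Measure ℝ) {z : ℂ} (hz : 0 < z.im) (hi : Integrable (fun l : ℝ => ((l : ℂ) - z)⁻¹) ν) :
    ∫⁻ l, pk z.im z.re l ∂ν = ENNReal.ofReal (∫ l : ℝ, ((l : ℂ) - z)⁻¹ ∂ν).im := by
  rw [ofReal_im_integral hi]
  · refine lintegral_congr fun l => ?_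
    unfold pk
    rw [← im_cauchy]
  · refine Eventually.of_forall fun l => ?_
    change 0 ≤ (((l : ℂ) - z)⁻¹).im
    rw [im_cauchy]; positivity

lemma im_M (H0 : SelfAdjointOp H) (K : H →L[ℂ] H) {z : ℂ} (hz : 0 < z.im) (x : H) :
    0 ≤ (⟪x, (ContinuousLinearMap.adjoint K * H0.resolvent z * K) x⟫_ℂ).im := by
  have : ⟪x, (ContinuousLinearMap.adjoint K * H0.resolvent z * K) x⟫_ℂ = ⟪K x, H0.resolvent z (K x)⟫_ℂ := by
    simp [ContinuousLinearMap.adjoint_inner_right]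
  rw [this]; exact res_im H0 hz _

lemma X_rel {A B : SelfAdjointOp H} {K : H →L[ℂ] H} {s : ℝ}
    (h : IsSumOf B A ((s : ℂ) • (K * ContinuousLinearMap.adjoint K))) {z : ℂ} (hz : z.im ≠ 0) :
    IsUnit (1 + (s : ℂ) • (ContinuousLinearMap.adjoint K * A.resolvent z * K)) ∧
    ContinuousLinearMap.adjoint K * B.resolvent z * K =
      Ring.inverse (1 + (s : ℂ) • (ContinuousLinearMap.adjoint K * A.resolvent z * K)) *
        (ContinuousLinearMap.adjoint K * A.resolvent z * K) := by
  set L := ContinuousLinearMap.adjoint K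
  set M := L * A.resolvent z * K with hMdef
  set X := L * B.resolvent z * K with hXdef
  have e1 : X + (s:ℂ) • (M * X) = M := by
    have := congrArg (fun T => L * T * K) (res_eq1 h hz)
    simp only [mul_add, add_mul, mul_smul_comm, smul_mul_assoc] at this
    simpa only [hMdef, hXdef, mul_assoc] using this
  have e2 : X + (s:ℂ) • (X * M) = M := by
    have := congrArg (fun T => L * T * K) (res_eq2 h hz)
    simp only [mul_add, add_mul, mul_smul_comm, smul_mul_assoc] at this
    simpa only [hMdef, hXdef, mul_assoc] using this
  have u1 : (1 + (s:ℂ) • M) * (1 - (s:ℂ) • X) = 1 := by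
    have : (1 + (s:ℂ) • M) * (1 - (s:ℂ) • X) = 1 + (s:ℂ) • (M - (X + (s:ℂ) • (M * X))) := by
      simp only [add_mul, mul_sub, one_mul, mul_one, mul_smul_comm, smul_mul_assoc, smul_sub, smul_add]
      abel
    rw [this, e1]; simp
  have u2 : (1 - (s:ℂ) • X) * (1 + (s:ℂ) • M) = 1 := by
    have : (1 - (s:ℂ) • X) * (1 + (s:ℂ) • M) = 1 + (s:ℂ) • (M - (X + (s:ℂ) • (X * M))) := by
      simp only [mul_add, sub_mul, one_mul, mul_one, mul_smul_comm, smul_mul_assoc, smul_sub, smul_add]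
      abel
    rw [this, e2]; simp
  have hu : IsUnit (1 + (s:ℂ) • M) := ⟨⟨_, _, u1, u2⟩, rfl⟩
  refine ⟨hu, ?_⟩
  have e3 : (1 + (s:ℂ) • M) * X = M := by
    rw [add_mul, one_mul, smul_mul_assoc]; exact e1
  calc X = Ring.inverse (1 + (s:ℂ) • M) * ((1 + (s:ℂ) • M) * X) := by
        rw [← mul_assoc, Ring.inverse_mul_cancel _ hu, one_mul]
    _ = _ := by rw [e3]

lemma proj_inner {P : H →L[ℂ] H} (h1 : IsSelfAdjoint P) (h2 : P * P = P) (x : H) :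
    ⟪x, P x⟫_ℂ = ((‖P x‖ ^ 2 : ℝ) : ℂ) := by
  have e : ⟪x, P x⟫_ℂ = ⟪P x, P x⟫_ℂ := by
    conv_lhs => rw [← h2]
    rw [ContinuousLinearMap.mul_apply, ← ContinuousLinearMap.adjoint_inner_left,
      ContinuousLinearMap.isSelfAdjoint_iff'.1 h1]
  rw [e, inner_self_eq_norm_sq_to_K]
  simp

lemma diag (H0 : SelfAdjointOp H) (K : H →L[ℂ] H)
    (Hs : ℝ → SelfAdjointOp H)
    (hHs : ∀ s ∈ Set.Icc (0 : ℝ) 1,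
      IsSumOf (Hs s) H0 ((s : ℂ) • (K * ContinuousLinearMap.adjoint K)))
    (E : ℝ → Set ℝ → H →L[ℂ] H)
    (hE : ∀ s ∈ Set.Icc (0 : ℝ) 1, IsSpectralMeasure (Hs s) (E s))
    (Ξ : ℝ → H →L[ℂ] H)
    (hmeas : ∀ f g : H, Measurable fun l : ℝ => ⟪f, Ξ l g⟫_ℂ)
    (hbd : ∀ᵐ l ∂(volume : Measure ℝ), (Ξ l).IsPositive)
    (hrep : ∀ z : ℂ, z.im ≠ 0 → ∀ f g : H,
      Integrable (fun l : ℝ => ((l : ℂ) - z)⁻¹ * ⟪f, Ξ l g⟫_ℂ) ∧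
      ⟪f, logHerg
          (fun w => 1 + ContinuousLinearMap.adjoint K * H0.resolvent w * K) z g⟫_ℂ =
        ∫ l : ℝ, ((l : ℂ) - z)⁻¹ * ⟪f, Ξ l g⟫_ℂ)
    (h : H) (B : Set ℝ) (hB : MeasurableSet B) :
    IntervalIntegrable (fun s => ⟪h, (ContinuousLinearMap.adjoint K * E s B * K) h⟫_ℂ) volume 0 1 ∧
    IntegrableOn (fun l => ⟪h, Ξ l h⟫_ℂ) B ∧
    ∫ s in (0:ℝ)..1, ⟪h, (ContinuousLinearMap.adjoint K * E s B * K) h⟫_ℂ =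
        ∫ l in B, ⟪h, Ξ l h⟫_ℂ := by
  classical
  have hE5 := fun s hs => (hE s hs).2.2.2.2
  choose! μ hμ using hE5
  set I : Set ℝ := Set.Icc (0:ℝ) 1 with hI
  have hIm : MeasurableSet I := measurableSet_Icc
  set k := K h with hk
  set ν : ℝ → Measure ℝ := fun s => if s ∈ I then μ s k else 0 with hν
  have hνI : ∀ s ∈ I, ν s = μ s k := fun s hs => by simp [hν, hs]
  have hνn : ∀ s ∉ I, ν s = 0 := fun s hs => by simp [hν, hs]
  have huniv : ∀ s, ν s Set.univ ≤ ENNReal.ofReal (‖k‖ ^ 2) := by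
    intro s
    by_cases hs : s ∈ I
    · rw [hνI s hs, (hμ s hs).1 k _ MeasurableSet.univ, (hE s hs).2.2.1]
      apply ENNReal.ofReal_le_ofReal
      rw [ContinuousLinearMap.one_apply, inner_self_eq_norm_sq_to_K]
      rw [← RCLike.ofReal_pow]
      exact le_of_eq (RCLike.ofReal_re (K := ℂ) _)
    · simp [hνn s hs]
  have hfin : ∀ s, IsFiniteMeasure (ν s) := fun s => ⟨(huniv s).trans_lt ENNReal.ofReal_lt_top⟩
  -- Poisson transform of ν s
  have hpois : ∀ z : ℂ, 0 < z.im → ∀ s ∈ I, ∫⁻ l, pk z.im z.re l ∂(ν s) =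
      ENNReal.ofReal (⟪h, (Ring.inverse (1 + (s : ℂ) • (ContinuousLinearMap.adjoint K * H0.resolvent z * K)) *
        (ContinuousLinearMap.adjoint K * H0.resolvent z * K)) h⟫_ℂ).im := by
    intro z hz s hs
    rw [poisson_eq (ν s) hz (cauchy_integrable _ hz), hνI s hs, ← (hμ s hs).2 z hz.ne' k,
      ← (X_rel (hHs s hs) hz.ne').2]
    simp [ContinuousLinearMap.adjoint_inner_right, hk]
  have hcont : ∀ z : ℂ, 0 < z.im → ContinuousOn (fun s : ℝ => 
      Ring.inverse (1 + (s : ℂ) • (ContinuousLinearMap.adjoint K * H0.resolvent z * K)) *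
        (ContinuousLinearMap.adjoint K * H0.resolvent z * K)) I := by
    intro z hz s hs
    have hc : Continuous (fun s : ℝ => 1 + (s : ℂ) • (ContinuousLinearMap.adjoint K * H0.resolvent z * K)) := by
      fun_prop
    obtain ⟨u, hu⟩ := (X_rel (hHs s hs) hz.ne').1
    have h1 : ContinuousAt Ring.inverse (1 + (s : ℂ) • (ContinuousLinearMap.adjoint K * H0.resolvent z * K)) := by
      rw [← hu]; exact NormedRing.inverse_continuousAt u
    exact ((ContinuousAt.comp (f := fun s : ℝ => 1 + (s : ℂ) • (ContinuousLinearMap.adjoint K * H0.resolvent z * K))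
      h1 hc.continuousAt).mul continuousAt_const).continuousWithinAt
  have hcont2 : ∀ z : ℂ, 0 < z.im → ContinuousOn (fun s : ℝ => 
      ⟪h, (Ring.inverse (1 + (s : ℂ) • (ContinuousLinearMap.adjoint K * H0.resolvent z * K)) *
        (ContinuousLinearMap.adjoint K * H0.resolvent z * K)) h⟫_ℂ) I := by
    intro z hz
    exact continuousOn_const.inner ((hcont z hz).clm_apply continuousOn_const)
  have hνmeas : Measurable ν := by
    refine poisson_measurable ν fun x y hy => ?_
    have hz : 0 < (⟨x, y⟩ : ℂ).im := hy
    have e : (fun s => ∫⁻ l, pk y x l ∂(ν s)) = I.piecewise (fun s => ENNReal.ofReal (⟪h, (Ring.inverse (1 + (s : ℂ) • (ContinuousLinearMap.adjoint K * H0.resolvent ⟨x, y⟩ * K)) *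
        (ContinuousLinearMap.adjoint K * H0.resolvent ⟨x, y⟩ * K)) h⟫_ℂ).im) (fun _ => 0) := by
      ext s
      by_cases hs : s ∈ I
      · rw [Set.piecewise_eq_of_mem _ _ _ hs]; exact hpois ⟨x, y⟩ hz s hs
      · rw [Set.piecewise_eq_of_notMem _ _ _ hs, hνn s hs]; simp
    rw [e]
    refine ContinuousOn.measurable_piecewise ?_ continuousOn_const hIm
    exact ENNReal.continuous_ofReal.comp_continuousOn (Complex.continuous_im.comp_continuousOn (hcont2 _ hz))
  set J : Set ℝ := Set.Ioc (0:ℝ) 1 with hJ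
  have hJI : J ⊆ I := Set.Ioc_subset_Icc_self
  set νb : Measure ℝ := (volume.restrict J).bind ν with hνb
  have hνba : ∀ C, MeasurableSet C → νb C = ∫⁻ s in J, ν s C := fun C hC =>
    Measure.bind_apply hC hνmeas.aemeasurable
  have hνbfin : IsFiniteMeasure νb := by
    constructor
    rw [hνba _ MeasurableSet.univ]
    calc _ ≤ ∫⁻ s in J, ENNReal.ofReal (‖k‖ ^ 2) := lintegral_mono fun s => huniv s
      _ < ⊤ := by
        rw [lintegral_const]
        exact ENNReal.mul_lt_top ENNReal.ofReal_lt_top (by simp [hJ])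
  have hpos : ∀ᵐ l ∂(volume : Measure ℝ), ⟪h, Ξ l h⟫_ℂ = (((⟪h, Ξ l h⟫_ℂ).re : ℝ) : ℂ) ∧ 0 ≤ (⟪h, Ξ l h⟫_ℂ).re := by
    filter_upwards [hbd] with l hl
    have h0 := hl.inner_nonneg_right h
    rw [Complex.nonneg_iff] at h0
    exact ⟨Complex.ext (by simp) (by simp [← h0.2]), h0.1⟩
  set ξ : ℝ → ENNReal := fun l => ENNReal.ofReal (⟪h, Ξ l h⟫_ℂ).re with hξ
  have hξm : Measurable ξ := (Complex.measurable_re.comp (hmeas h h)).ennreal_ofReal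
  have hkey : νb = volume.withDensity ξ := by
    refine poisson_unique _ _ fun x y hy => ?_
    set z : ℂ := ⟨x, y⟩ with hzdef
    have hz : 0 < z.im := hy
    change ∫⁻ l, pk z.im z.re l ∂νb = ∫⁻ l, pk z.im z.re l ∂(volume.withDensity ξ)
    have hu : ∀ s ∈ Set.Icc (0:ℝ) 1, IsUnit (1 + (s : ℂ) • (ContinuousLinearMap.adjoint K * H0.resolvent z * K)) :=
      fun s hs => (X_rel (hHs s hs) hz.ne').1
    have hlog := opLog_eq (im_M H0 K hz) hu
    obtain ⟨hi, hr⟩ := hrep z hz.ne' h h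
    rw [logHerg, if_pos hz, hlog] at hr
    set X : ℝ → H →L[ℂ] H := fun s => Ring.inverse (1 + (s : ℂ) • (ContinuousLinearMap.adjoint K * H0.resolvent z * K)) *
        (ContinuousLinearMap.adjoint K * H0.resolvent z * K) with hX
    have hXi : IntervalIntegrable X volume 0 1 := by
      refine ContinuousOn.intervalIntegrable ?_
      rw [Set.uIcc_of_le zero_le_one]; exact hcont z hz
    have hXi2 : IntegrableOn (fun s => ⟪h, X s h⟫_ℂ) J := 
      ((hcont2 z hz).integrableOn_compact isCompact_Icc).mono_set hJI
    have hr2 : ⟪h, (∫ s in (0:ℝ)..1, X s) h⟫_ℂ = ∫ s in J, ⟪h, X s h⟫_ℂ := by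
      rw [← intervalIntegral.integral_of_le zero_le_one]
      have := ((innerSL ℂ h).comp (ContinuousLinearMap.apply ℂ H h)).intervalIntegral_comp_comm hXi
      simpa using this.symm
    rw [hr2] at hr
    have hl : ∫⁻ l, pk z.im z.re l ∂νb = ENNReal.ofReal (∫ s in J, ⟪h, X s h⟫_ℂ).im := by
      rw [hνb, Measure.lintegral_bind hνmeas.aemeasurable (pk_meas_l _ _).aemeasurable]
      rw [ofReal_im_integral hXi2]
      · refine setLIntegral_congr_fun measurableSet_Ioc fun s hs => ?_
        exact hpois z hz s (hJI hs)
      · refine (ae_restrict_iff' measurableSet_Ioc).2 (Eventually.of_forall fun s hs => ?_)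
        change 0 ≤ (⟪h, X s h⟫_ℂ).im
        have : X s = _ := (X_rel (hHs s (hJI hs)) hz.ne').2.symm
        rw [this]
        exact im_M _ _ hz _
    rw [hl, hr, lintegral_withDensity_eq_lintegral_mul _ hξm (pk_meas_l _ _)]
    have hval : ∀ᵐ l : ℝ ∂(volume : Measure ℝ), (((l : ℂ) - z)⁻¹ * ⟪h, Ξ l h⟫_ℂ).im
        = (⟪h, Ξ l h⟫_ℂ).re * (z.im / ((l - z.re) ^ 2 + z.im ^ 2)) := by
      filter_upwards [hpos] with l hl
      rw [hl.1, Complex.im_mul_ofReal, im_cauchy, Complex.ofReal_re, mul_comm]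
    rw [ofReal_im_integral hi]
    · refine lintegral_congr_ae ?_
      filter_upwards [hpos, hval] with l hl hv
      change ENNReal.ofReal (((l : ℂ) - z)⁻¹ * ⟪h, Ξ l h⟫_ℂ).im = ξ l * pk z.im z.re l
      rw [hv, ENNReal.ofReal_mul hl.2]; rfl
    · filter_upwards [hpos, hval] with l hl hv
      change 0 ≤ (((l : ℂ) - z)⁻¹ * ⟪h, Ξ l h⟫_ℂ).im
      rw [hv]
      exact mul_nonneg hl.2 (by positivity)
  -- conclusion
  have hval : ∀ s ∈ J, ⟪h, (ContinuousLinearMap.adjoint K * E s B * K) h⟫_ℂ = (((ν s B).toReal : ℝ) : ℂ) := by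
    intro s hs
    have hs' := hJI hs
    have hEs := hE s hs'
    have hp := proj_inner (hEs.1 B hB) (by rw [hEs.2.1 B B hB hB, Set.inter_self]) k
    have e : ⟪h, (ContinuousLinearMap.adjoint K * E s B * K) h⟫_ℂ = ⟪k, E s B k⟫_ℂ := by
      simp [ContinuousLinearMap.adjoint_inner_right, hk]
    rw [e, hνI s hs', (hμ s hs').1 k B hB, hp, Complex.ofReal_re, ENNReal.toReal_ofReal (by positivity)]
  have hνBm : Measurable fun s => ν s B := (Measure.measurable_coe hB).comp hνmeas
  have hfinB : ∫⁻ s in J, ν s B ≠ ⊤ := by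
    rw [← hνba B hB]; exact measure_ne_top _ _
  have hint1 : IntegrableOn (fun s => (ν s B).toReal) J :=
    integrable_toReal_of_lintegral_ne_top hνBm.aemeasurable hfinB
  have hξB : ∫⁻ l in B, ξ l = ∫⁻ s in J, ν s B := by
    rw [← hνba B hB, hkey, withDensity_apply _ hB]
  have hξi : IntegrableOn (fun l => (ξ l).toReal) B :=
    integrable_toReal_of_lintegral_ne_top hξm.aemeasurable (by rw [hξB]; exact hfinB)
  have hval2 : ∀ᵐ l ∂(volume.restrict B), (((ξ l).toReal : ℝ) : ℂ) = ⟪h, Ξ l h⟫_ℂ := by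
    filter_upwards [ae_restrict_of_ae hpos] with l hl
    rw [hl.1, hξ]
    simp only [Complex.ofReal_re]
    rw [ENNReal.toReal_ofReal hl.2]
  refine ⟨?_, ?_, ?_⟩
  · rw [intervalIntegrable_iff_integrableOn_Ioc_of_le zero_le_one]
    exact (integrableOn_congr_fun hval measurableSet_Ioc).2 hint1.ofReal
  · exact (hξi.ofReal (𝕜 := ℂ)).congr hval2
  · rw [intervalIntegral.integral_of_le zero_le_one, setIntegral_congr_fun measurableSet_Ioc hval,
      ← integral_congr_ae hval2, integral_complex_ofReal, integral_complex_ofReal]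
    congr 1
    rw [integral_toReal hνBm.aemeasurable, integral_toReal hξm.aemeasurable, hξB]
    · exact ae_lt_top' hξm.aemeasurable (by rw [hξB]; exact hfinB)
    · exact ae_lt_top hνBm hfinB

/-- Theorem 4.5 (operator-valued spectral averaging): for `H(s) = H₀ + sKK*`,
`∫₀¹ d(K* E_{H(s)}(λ) K) ds = Ξ(λ) dλ` in the weak sense, where `Ξ` is the spectral
shift operator associated with `Φ(z) = I + K*(H₀-z)⁻¹K`. -/
theorem operator_valued_spectral_averaging [SeparableSpace H]
    (H0 : SelfAdjointOp H) (K : H →L[ℂ] H) (hK : IsHilbertSchmidt K)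
    (Hs : ℝ → SelfAdjointOp H)
    (hHs : ∀ s ∈ Set.Icc (0 : ℝ) 1,
      IsSumOf (Hs s) H0 ((s : ℂ) • (K * ContinuousLinearMap.adjoint K)))
    (E : ℝ → Set ℝ → H →L[ℂ] H)
    (hE : ∀ s ∈ Set.Icc (0 : ℝ) 1, IsSpectralMeasure (Hs s) (E s))
    (Ξ : ℝ → H →L[ℂ] H)
    (hmeas : ∀ f g : H, Measurable fun l : ℝ => ⟪f, Ξ l g⟫_ℂ)
    (hbd : ∀ᵐ l ∂(volume : Measure ℝ),
      (Ξ l).IsPositive ∧ ((1 : H →L[ℂ] H) - Ξ l).IsPositive ∧ IsTraceClass (Ξ l))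
    (hL1 : Integrable fun l : ℝ => traceNorm (Ξ l))
    (hrep : ∀ z : ℂ, z.im ≠ 0 → ∀ f g : H,
      Integrable (fun l : ℝ => ((l : ℂ) - z)⁻¹ * ⟪f, Ξ l g⟫_ℂ) ∧
      ⟪f, logHerg
          (fun w => 1 + ContinuousLinearMap.adjoint K * H0.resolvent w * K) z g⟫_ℂ =
        ∫ l : ℝ, ((l : ℂ) - z)⁻¹ * ⟪f, Ξ l g⟫_ℂ) :
    ∀ f g : H, ∀ B : Set ℝ, MeasurableSet B → Bornology.IsBounded B →
      ∫ s in (0:ℝ)..1, ⟪f, (ContinuousLinearMap.adjoint K * E s B * K) g⟫_ℂ =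
        ∫ l in B, ⟪f, Ξ l g⟫_ℂ := by
  intro f g B hB _
  have hpos : ∀ᵐ l ∂(volume : Measure ℝ), (Ξ l).IsPositive := hbd.mono fun l hl => hl.1
  have D := fun h => diag H0 K Hs hHs E hE Ξ hmeas hpos hrep h B hB
  have e1 : ∀ s : ℝ, ⟪f, (ContinuousLinearMap.adjoint K * E s B * K) g⟫_ℂ = _ := fun s =>
    polar (ContinuousLinearMap.adjoint K * E s B * K) f g
  have e2 : ∀ l : ℝ, ⟪f, Ξ l g⟫_ℂ = _ := fun l => polar (Ξ l) f g
  simp_rw [e1, e2]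
  have a1 := D (f + g)
  have a2 := D (f - g)
  have a3 := D (f + Complex.I • g)
  have a4 := D (f - Complex.I • g)
  rw [intervalIntegral.integral_const_mul, integral_const_mul]
  congr 1
  have s1 : IntegrableOn (fun l => ⟪f + g, Ξ l (f + g)⟫_ℂ - ⟪f - g, Ξ l (f - g)⟫_ℂ) B :=
    a1.2.1.sub a2.2.1
  have s2 : IntegrableOn (fun l => ⟪f + g, Ξ l (f + g)⟫_ℂ - ⟪f - g, Ξ l (f - g)⟫_ℂ
      - Complex.I * ⟪f + Complex.I • g, Ξ l (f + Complex.I • g)⟫_ℂ) B :=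
    s1.sub (a3.2.1.const_mul _)
  rw [intervalIntegral.integral_add ((a1.1.sub a2.1).sub (a3.1.const_mul _)) (a4.1.const_mul _),
    intervalIntegral.integral_sub (a1.1.sub a2.1) (a3.1.const_mul _),
    intervalIntegral.integral_sub a1.1 a2.1,
    intervalIntegral.integral_const_mul, intervalIntegral.integral_const_mul,
    integral_add s2 (a4.2.1.const_mul _),
    integral_sub s1 (a3.2.1.const_mul _),
    integral_sub a1.2.1 a2.2.1, integral_const_mul, integral_const_mul,
    a1.2.2, a2.2.2, a3.2.2, a4.2.2]

end SpectralShift
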